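/- arXiv:math/0406455 — 2 statements merged into one kernel-verified Lean document; each statement's English description precedes it below -/
import Mathlib

section
/- Let V₀ = I_n and V₁, …, V_q be n×n positive semidefinite real matrices, let σ₀ > 0 and σ₁, …, σ_q ≥ 0, and set Σ = ∑_{j=0}^{q} σ_j V_j. Let X be an n×p real matrix of full column rank p, and set P = Σ⁻¹ − Σ⁻¹X(X′Σ⁻¹X)⁻¹X′Σ⁻¹. Then for all indices i, j, k ∈ {0, 1, …, q} with σ_i, σ_j, σ_k > 0, |tr(Σ⁻¹V_iΣ⁻¹V_jΣ⁻¹V_k) − tr(PV_iPV_jPV_k)| ≤ 7p/(σ_iσ_jσ_k). -/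
open Matrix

/-- The covariance matrix `Σ = ∑_{j=0}^{q} σ_j V_j` of a mixed ANOVA model. -/
noncomputable def SigM {n q : ℕ} (V : Fin (q + 1) → Matrix (Fin n) (Fin n) ℝ)
    (σ : Fin (q + 1) → ℝ) : Matrix (Fin n) (Fin n) ℝ :=
  ∑ j, σ j • V j

/-- The REML projection matrix `P = Σ⁻¹ − Σ⁻¹X(X′Σ⁻¹X)⁻¹X′Σ⁻¹`. -/
noncomputable def Pmat {n p q : ℕ} (V : Fin (q + 1) → Matrix (Fin n) (Fin n) ℝ)
    (σ : Fin (q + 1) → ℝ) (X : Matrix (Fin n) (Fin p) ℝ) : Matrix (Fin n) (Fin n) ℝ :=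
  (SigM V σ)⁻¹ - (SigM V σ)⁻¹ * X * (Xᵀ * (SigM V σ)⁻¹ * X)⁻¹ * Xᵀ * (SigM V σ)⁻¹

/-!
Write `Σ⁻¹ = BᴴB`. Then `P = Bᴴ(1 - Q)B`, where `Q` is the orthogonal projection onto the column
space of `BX`, so that `tr Q = p`. The whitened components `A_j = B(σ_j V_j)Bᴴ` are positive
semidefinite and sum to `BΣBᴴ = 1`, so they lie between `0` and `1` and are contractions. After
cycling the factors `B` and `Bᴴ` inside the traces, the quantity to bound, multiplied by
`σ_i σ_j σ_k`, is `tr(A_i A_j A_k) - tr((1 - Q)A_i(1 - Q)A_j(1 - Q)A_k)`. Replacing the factors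
`1 - Q` by `1` one at a time writes this difference as three terms `tr(Q N)` with `N` a contraction,
each of absolute value at most `tr Q`. This yields the constant `3` in place of `7`.
-/

section MatrixAlgebra

variable {n R : Type*} [Fintype n] [DecidableEq n] [CommRing R]

lemma trace_mul_mul_sub_trace_compression (Q A B C : Matrix n n R) :
    (A * B * C).trace - ((1 - Q) * A * (1 - Q) * B * (1 - Q) * C).trace
      = (Q * (A * B * C)).trace + (Q * (B * C * ((1 - Q) * A))).trace
        + (Q * (C * ((1 - Q) * A) * ((1 - Q) * B))).trace := by
  have h_second : (Q * (B * C * ((1 - Q) * A))).trace = ((1 - Q) * A * Q * B * C).trace := by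
    rw [← Matrix.mul_assoc, trace_mul_comm]
    simp only [Matrix.mul_assoc]
  have h_third : (Q * (C * ((1 - Q) * A) * ((1 - Q) * B))).trace
      = ((1 - Q) * A * (1 - Q) * B * Q * C).trace := by
    rw [Matrix.mul_assoc C, ← Matrix.mul_assoc, trace_mul_comm]
    simp only [Matrix.mul_assoc]
  rw [h_second, h_third, ← trace_sub, ← trace_add, ← trace_add]
  congr 1
  noncomm_ring

lemma mul_mul_eq_one_of_inv_eq_mul {S B C : Matrix n n R} (hS : IsUnit S) (hCB : S⁻¹ = C * B) :
    B * S * C = 1 := by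
  rw [mul_eq_one_comm, ← Matrix.mul_assoc, ← hCB]
  exact nonsing_inv_mul S ((isUnit_iff_isUnit_det S).mp hS)

end MatrixAlgebra

lemma trace_sandwich_mul_eq_trace_mul_sandwich {m n R : Type*} [Fintype m] [Fintype n]
    [CommSemiring R] (C : Matrix n m R) (M : Matrix m m R) (B : Matrix m n R)
    (W₁ W₂ W₃ : Matrix n n R) :
    (C * M * B * W₁ * (C * M * B) * W₂ * (C * M * B) * W₃).trace
      = (M * (B * W₁ * C) * M * (B * W₂ * C) * M * (B * W₃ * C)).trace := by
  simp only [Matrix.mul_assoc]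
  rw [trace_mul_comm]
  simp only [Matrix.mul_assoc]

section Projections

variable {m n p R : Type*} [Fintype m] [Fintype n] [DecidableEq n] [Fintype p] [DecidableEq p]
  [CommRing R] [StarRing R]

/-- The orthogonal projection `Y(YᴴY)⁻¹Yᴴ` onto the column space of `Y`. It has this meaning only
when `YᴴY` is invertible; otherwise the inverse, and with it the whole expression, is `0`. -/
noncomputable def colProjection (Y : Matrix m p R) : Matrix m m R :=
  Y * (Yᴴ * Y)⁻¹ * Yᴴ

lemma isStarProjection_colProjection {Y : Matrix m p R} (hY : IsUnit (Yᴴ * Y).det) :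
    IsStarProjection (colProjection Y) where
  isIdempotentElem :=
    calc colProjection Y * colProjection Y
        = Y * ((Yᴴ * Y)⁻¹ * (Yᴴ * Y)) * (Yᴴ * Y)⁻¹ * Yᴴ := by
          simp only [colProjection, Matrix.mul_assoc]
      _ = colProjection Y := by rw [nonsing_inv_mul _ hY, Matrix.mul_one, colProjection]
  isSelfAdjoint := by
    simp [IsSelfAdjoint, colProjection, star_eq_conjTranspose, conjTranspose_nonsing_inv,
      Matrix.mul_assoc]

lemma trace_colProjection {Y : Matrix m p R} (hY : IsUnit (Yᴴ * Y).det) :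
    (colProjection Y).trace = Fintype.card p := by
  rw [colProjection, trace_mul_cycle, trace_mul_comm, nonsing_inv_mul _ hY, trace_one]

/-- The REML projection matrix `P = S⁻¹ - S⁻¹X(XᴴS⁻¹X)⁻¹XᴴS⁻¹` of a covariance matrix `S` and a
design matrix `X`, with the conjugate transpose so as to cover complex matrices as well. -/
noncomputable def remlMatrix (S : Matrix n n R) (X : Matrix n p R) : Matrix n n R :=
  S⁻¹ - S⁻¹ * X * (Xᴴ * S⁻¹ * X)⁻¹ * Xᴴ * S⁻¹

lemma remlMatrix_eq_conjTranspose_mul_one_sub_colProjection_mul [DecidableEq m]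
    {S : Matrix n n R} {B : Matrix m n R} (hB : S⁻¹ = Bᴴ * B) (X : Matrix n p R) :
    remlMatrix S X = Bᴴ * (1 - colProjection (B * X)) * B := by
  simp only [remlMatrix, colProjection, hB, conjTranspose_mul, Matrix.mul_sub, Matrix.sub_mul,
    Matrix.mul_one, Matrix.mul_assoc]

end Projections

lemma mulVec_injective_of_rank_eq_card {m n K : Type*} [Fintype n] [Field K]
    {X : Matrix m n K} (hX : X.rank = Fintype.card n) : Function.Injective X.mulVec := by
  rw [mulVec_injective_iff, linearIndependent_iff_card_eq_finrank_span, Set.finrank,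
    ← rank_eq_finrank_span_cols, hX]

section OrderedStarAlgebra

variable {A : Type*} [NormedRing A] [StarRing A] [NormedAlgebra ℝ A] [PartialOrder A]
  [StarOrderedRing A] [NonnegSpectrumClass ℝ A]
  [IsometricContinuousFunctionalCalculus ℝ A IsSelfAdjoint]

lemma norm_le_of_mem_Icc_algebraMap {a : A} {r : ℝ} (hr : 0 ≤ r)
    (ha : a ∈ Set.Icc (algebraMap ℝ A (-r)) (algebraMap ℝ A r)) : ‖a‖ ≤ r := by
  have ha_sa : IsSelfAdjoint a := by
    simpa using (cfc_predicate_algebraMap (A := A) r).sub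
      (IsSelfAdjoint.of_nonneg (sub_nonneg.mpr ha.2))
  rw [← cfc_id ℝ a]
  refine norm_cfc_le hr fun x hx => abs_le.mpr ⟨?_, ?_⟩
  · exact (algebraMap_le_iff_le_spectrum ha_sa).mp ha.1 x hx
  · exact (le_algebraMap_iff_spectrum_le ha_sa).mp ha.2 x hx

end OrderedStarAlgebra

section TraceBounds

open scoped ComplexOrder MatrixOrder Matrix.Norms.L2Operator

variable {n 𝕜 : Type*} [Fintype n] [DecidableEq n] [RCLike 𝕜]

lemma norm_star_dotProduct_mulVec_le (N : Matrix n n 𝕜) (v : n → 𝕜) :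
    ‖star v ⬝ᵥ N *ᵥ v‖ ≤ ‖N‖ * RCLike.re (star v ⬝ᵥ v) := by
  let x : EuclideanSpace 𝕜 n := WithLp.toLp 2 v
  have h_inner (w : n → 𝕜) : star v ⬝ᵥ w = inner 𝕜 x (WithLp.toLp 2 w) := by
    rw [EuclideanSpace.inner_eq_star_dotProduct, dotProduct_comm]
  calc ‖star v ⬝ᵥ N *ᵥ v‖
      = ‖inner 𝕜 x (WithLp.toLp 2 (N *ᵥ v))‖ := by rw [h_inner]
    _ ≤ ‖x‖ * ‖WithLp.toLp 2 (N *ᵥ v)‖ := norm_inner_le_norm _ _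
    _ ≤ ‖x‖ * (‖N‖ * ‖x‖) := by gcongr; exact l2_opNorm_mulVec N x
    _ = ‖N‖ * (‖x‖ * ‖x‖) := by ring
    _ = ‖N‖ * RCLike.re (star v ⬝ᵥ v) := by rw [h_inner, inner_self_eq_norm_mul_norm]

lemma norm_trace_mul_le {Q : Matrix n n 𝕜} (hQ : Q.PosSemidef) (N : Matrix n n 𝕜) :
    ‖(Q * N).trace‖ ≤ ‖N‖ * RCLike.re Q.trace := by
  obtain ⟨B, rfl⟩ := CStarAlgebra.nonneg_iff_eq_mul_star_self.mp hQ.nonneg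
  have h_trace (M : Matrix n n 𝕜) :
      (B * star B * M).trace = ∑ a, star (B.col a) ⬝ᵥ M *ᵥ B.col a := by
    rw [Matrix.mul_assoc, trace_mul_comm, Matrix.mul_assoc]
    rfl
  have h_trace_one := h_trace 1
  simp only [Matrix.mul_one, one_mulVec] at h_trace_one
  rw [h_trace, h_trace_one, map_sum, Finset.mul_sum]
  exact norm_sum_le_of_le _ fun a _ => norm_star_dotProduct_mulVec_le N _

lemma norm_trace_mul_mul_sub_trace_compression_le {Q : Matrix n n 𝕜} (hQ : IsStarProjection Q)
    (A B C : Matrix n n 𝕜) :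
    ‖(A * B * C).trace - ((1 - Q) * A * (1 - Q) * B * (1 - Q) * C).trace‖
      ≤ 3 * (‖A‖ * ‖B‖ * ‖C‖) * RCLike.re Q.trace := by
  set M := 1 - Q
  have h_contract (N : Matrix n n 𝕜) : ‖M * N‖ ≤ ‖N‖ :=
    (norm_mul_le _ _).trans (mul_le_of_le_one_left (norm_nonneg N) (hQ.one_sub.norm_le M))
  have h_first : ‖A * B * C‖ ≤ ‖A‖ * ‖B‖ * ‖C‖ := norm_mul₃_le
  have h_second : ‖B * C * (M * A)‖ ≤ ‖A‖ * ‖B‖ * ‖C‖ :=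
    calc ‖B * C * (M * A)‖ ≤ ‖B‖ * ‖C‖ * ‖M * A‖ := norm_mul₃_le
      _ ≤ ‖B‖ * ‖C‖ * ‖A‖ := by gcongr; exact h_contract A
      _ = ‖A‖ * ‖B‖ * ‖C‖ := by ring
  have h_third : ‖C * (M * A) * (M * B)‖ ≤ ‖A‖ * ‖B‖ * ‖C‖ :=
    calc ‖C * (M * A) * (M * B)‖ ≤ ‖C‖ * ‖M * A‖ * ‖M * B‖ := norm_mul₃_le
      _ ≤ ‖C‖ * ‖A‖ * ‖B‖ := by gcongr <;> exact h_contract _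
      _ = ‖A‖ * ‖B‖ * ‖C‖ := by ring
  have hQ_psd : Q.PosSemidef := hQ.nonneg.posSemidef
  have h_trace_nonneg : 0 ≤ RCLike.re Q.trace := (RCLike.nonneg_iff.mp hQ_psd.trace_nonneg).1
  have h_term {N : Matrix n n 𝕜} (hN : ‖N‖ ≤ ‖A‖ * ‖B‖ * ‖C‖) :
      ‖(Q * N).trace‖ ≤ ‖A‖ * ‖B‖ * ‖C‖ * RCLike.re Q.trace :=
    (norm_trace_mul_le hQ_psd N).trans (mul_le_mul_of_nonneg_right hN h_trace_nonneg)
  rw [trace_mul_mul_sub_trace_compression]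
  refine norm_add₃_le.trans ?_
  linarith [h_term h_first, h_term h_second, h_term h_third]

end TraceBounds

section REML

open scoped ComplexOrder MatrixOrder

variable {n p 𝕜 : Type*} [Fintype n] [DecidableEq n] [Fintype p] [DecidableEq p] [RCLike 𝕜]

open scoped Matrix.Norms.L2Operator in
lemma norm_mul_mul_conjTranspose_le_one {S B W : Matrix n n 𝕜} (hB : B * S * Bᴴ = 1)
    (hW : W ∈ Set.Icc (-S) S) : ‖B * W * Bᴴ‖ ≤ 1 := by
  -- Mathlib's operator-norm algebra structure is over `𝕜`; the functional calculus is over `ℝ`.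
  let _ : NormedAlgebra ℝ (Matrix n n 𝕜) :=
    { norm_smul_le := fun r A => by
        rw [RCLike.real_smul_eq_coe_smul (K := 𝕜), norm_smul, RCLike.norm_ofReal,
          Real.norm_eq_abs] }
  refine norm_le_of_mem_Icc_algebraMap zero_le_one ⟨?_, ?_⟩
  · simpa [star_eq_conjTranspose, hB] using star_right_conjugate_le_conjugate hW.1 B
  · simpa [star_eq_conjTranspose, hB] using star_right_conjugate_le_conjugate hW.2 B

open scoped Matrix.Norms.L2Operator in
theorem norm_trace_inv_sub_trace_remlMatrix_le {S : Matrix n n 𝕜} (hS : S.PosDef)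
    {X : Matrix n p 𝕜} (hX : Function.Injective X.mulVec) {W₁ W₂ W₃ : Matrix n n 𝕜}
    (h₁ : W₁ ∈ Set.Icc (-S) S) (h₂ : W₂ ∈ Set.Icc (-S) S) (h₃ : W₃ ∈ Set.Icc (-S) S) :
    ‖(S⁻¹ * W₁ * S⁻¹ * W₂ * S⁻¹ * W₃).trace
        - (remlMatrix S X * W₁ * remlMatrix S X * W₂ * remlMatrix S X * W₃).trace‖
      ≤ 3 * Fintype.card p := by
  obtain ⟨B, hB_unit, hB⟩ := CStarAlgebra.isStrictlyPositive_iff_eq_star_mul_self.mp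
    hS.inv.isStrictlyPositive
  rw [star_eq_conjTranspose] at hB
  have hBX : Function.Injective (B * X).mulVec := by
    simpa only [Function.comp_def, mulVec_mulVec] using
      (mulVec_injective_of_isUnit hB_unit).comp hX
  have h_gram : IsUnit ((B * X)ᴴ * (B * X)).det :=
    (isUnit_iff_isUnit_det _).mp (PosDef.conjTranspose_mul_self _ hBX).isUnit
  have hBS := mul_mul_eq_one_of_inv_eq_mul hS.isUnit hB
  have h_whiten : (S⁻¹ * W₁ * S⁻¹ * W₂ * S⁻¹ * W₃).trace
      = (B * W₁ * Bᴴ * (B * W₂ * Bᴴ) * (B * W₃ * Bᴴ)).trace := by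
    simpa [hB] using trace_sandwich_mul_eq_trace_mul_sandwich Bᴴ 1 B W₁ W₂ W₃
  rw [h_whiten, remlMatrix_eq_conjTranspose_mul_one_sub_colProjection_mul hB,
    trace_sandwich_mul_eq_trace_mul_sandwich]
  refine (norm_trace_mul_mul_sub_trace_compression_le
    (isStarProjection_colProjection h_gram) _ _ _).trans ?_
  rw [trace_colProjection h_gram, RCLike.natCast_re]
  have hA₁ := norm_mul_mul_conjTranspose_le_one hBS h₁
  have hA₂ := norm_mul_mul_conjTranspose_le_one hBS h₂
  have hA₃ := norm_mul_mul_conjTranspose_le_one hBS h₃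
  gcongr
  exact mul_le_of_le_one_right three_pos.le
    (mul_le_one₀ (mul_le_one₀ hA₁ (norm_nonneg _) hA₂) (norm_nonneg _) hA₃)

theorem stmt14_general {S : Matrix n n 𝕜} (hS : S.PosDef)
    {X : Matrix n p 𝕜} (hX : Function.Injective X.mulVec)
    {V₁ V₂ V₃ : Matrix n n 𝕜} {a b c : ℝ}
    (ha : 0 < a) (hb : 0 < b) (hc : 0 < c)
    (h₁ : a • V₁ ∈ Set.Icc (-S) S) (h₂ : b • V₂ ∈ Set.Icc (-S) S)
    (h₃ : c • V₃ ∈ Set.Icc (-S) S) :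
    ‖(S⁻¹ * V₁ * S⁻¹ * V₂ * S⁻¹ * V₃).trace
        - (remlMatrix S X * V₁ * remlMatrix S X * V₂ * remlMatrix S X * V₃).trace‖
      ≤ 3 * Fintype.card p / (a * b * c) := by
  have h_scale (R : Matrix n n 𝕜) : (R * (a • V₁) * R * (b • V₂) * R * (c • V₃)).trace
      = (a * b * c) • (R * V₁ * R * V₂ * R * V₃).trace := by
    simp only [Matrix.mul_smul, Matrix.smul_mul, smul_smul, trace_smul]
    ring_nf
  have h_key := norm_trace_inv_sub_trace_remlMatrix_le hS hX h₁ h₂ h₃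
  have h_pos : 0 < a * b * c := by positivity
  rwa [h_scale, h_scale, ← smul_sub, norm_smul, Real.norm_of_nonneg h_pos.le,
    ← le_div_iff₀' h_pos] at h_key

end REML

section ANOVA

variable {n p q : ℕ} {V : Fin (q + 1) → Matrix (Fin n) (Fin n) ℝ} {σ : Fin (q + 1) → ℝ}

variable (V σ) in
lemma Pmat_eq_remlMatrix (X : Matrix (Fin n) (Fin p) ℝ) :
    Pmat V σ X = remlMatrix (SigM V σ) X := by
  simp only [Pmat, remlMatrix, conjTranspose_eq_transpose_of_trivial]

lemma posDef_SigM (hV : ∀ j, (V j).PosSemidef) (hσ : ∀ j, 0 ≤ σ j) {j : Fin (q + 1)}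
    (hVj : (V j).PosDef) (hσj : 0 < σ j) : (SigM V σ).PosDef := by
  rw [SigM, ← Finset.add_sum_erase _ _ (Finset.mem_univ j)]
  exact (hVj.smul hσj).add_posSemidef (posSemidef_sum _ fun l _ => (hV l).smul (hσ l))

open scoped MatrixOrder in
lemma smul_mem_Icc_SigM (hV : ∀ j, (V j).PosSemidef) (hσ : ∀ j, 0 ≤ σ j) (i : Fin (q + 1)) :
    σ i • V i ∈ Set.Icc (-SigM V σ) (SigM V σ) := by
  have h_nonneg (j) : 0 ≤ σ j • V j := ((hV j).smul (hσ j)).nonneg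
  have h_sum : 0 ≤ SigM V σ := Finset.sum_nonneg fun j _ => h_nonneg j
  exact ⟨(neg_nonpos.mpr h_sum).trans (h_nonneg i),
    Finset.single_le_sum (fun j _ => h_nonneg j) (Finset.mem_univ i)⟩

end ANOVA

/-- `|tr(Σ⁻¹V_iΣ⁻¹V_jΣ⁻¹V_k) − tr(PV_iPV_jPV_k)| ≤ 7p/(σ_iσ_jσ_k)` (Section 5.3). -/
theorem stmt14 {n p q : ℕ}
    (V : Fin (q + 1) → Matrix (Fin n) (Fin n) ℝ)
    (hV0 : V 0 = 1) (hV : ∀ j, (V j).PosSemidef)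
    (σ : Fin (q + 1) → ℝ) (hσ0 : 0 < σ 0) (hσ : ∀ j, 0 ≤ σ j)
    (X : Matrix (Fin n) (Fin p) ℝ) (hX : X.rank = p)
    (i j k : Fin (q + 1)) (hi : 0 < σ i) (hj : 0 < σ j) (hk : 0 < σ k) :
    |((SigM V σ)⁻¹ * V i * (SigM V σ)⁻¹ * V j * (SigM V σ)⁻¹ * V k).trace
        - (Pmat V σ X * V i * Pmat V σ X * V j * Pmat V σ X * V k).trace|
      ≤ 7 * (p : ℝ) / (σ i * σ j * σ k) := by
  have h_bound := stmt14_general (posDef_SigM hV hσ (hV0 ▸ PosDef.one) hσ0)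
    (mulVec_injective_of_rank_eq_card (hX.trans (Fintype.card_fin p).symm)) hi hj hk
    (smul_mem_Icc_SigM hV hσ i) (smul_mem_Icc_SigM hV hσ j) (smul_mem_Icc_SigM hV hσ k)
  rw [← Pmat_eq_remlMatrix, Real.norm_eq_abs, Fintype.card_fin] at h_bound
  exact h_bound.trans (by gcongr; norm_num)
end

section
/- Fix w ≥ 1 and positive integers n₁, …, n_{w+1}; let S_{w+1} = {0,1}^{w+1}, n = ∏_{l=1}^{w+1} n_l, and for i ∈ S_{w+1} let Z_i = ⊗_{l=1}^{w+1} 1_{n_l}^{i_l} (where 1_n^1 is the n-vector of ones and 1_n^0 = I_n), K_i = ⊗_{l=1}^{w+1} J_{n_l}^{i_l} (where J_n^1 = J_n is the all-ones matrix and J_n^0 = I_n), and r_i = ∏_{l : i_l = 0} n_l. Let s ∈ S_{w+1} with s_{w+1} = 1, put X = Z_s and p = r_s, let S ⊆ S_{w+1}, σ₀ > 0, σ_k ≥ 0 for k ∈ S, and Σ = σ₀I_n + ∑_{k∈S} σ_k K_k; write Σ⁻¹ = ∑_{k∈S_{w+1}} τ_k K_k for the (unique) coefficients τ_k of the inverse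 in this Kronecker basis. Then, for each i ∈ S and each y ∈ ℝⁿ, the i-th BLUP block ṽ_i = σ_i Z_i′ (Σ⁻¹ − Σ⁻¹X(X′Σ⁻¹X)⁻¹X′Σ⁻¹) y satisfies ṽ_i = ∑_{k ∈ S_{w+1}} σ_i τ_k W_{i,k} y, where W_{i,k} = Z_i′(I_n − (p/n)XX′)K_k. -/
open Matrix

/-- The Kronecker-product basis matrix `K_i = ⊗_l J_{n_l}^{i_l}`, realized as a matrix
indexed by the product of the factor level sets. -/
noncomputable def Kmat (w : ℕ) (n : Fin (w + 1) → ℕ) (i : Fin (w + 1) → Bool) :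
    Matrix ((l : Fin (w + 1)) → Fin (n l)) ((l : Fin (w + 1)) → Fin (n l)) ℝ :=
  Matrix.of fun a b => ∏ l, if i l then (1 : ℝ) else (if a l = b l then 1 else 0)

/-- The design matrix `Z_i = ⊗_l 1_{n_l}^{i_l}`, realized as a matrix whose columns are
indexed by the factors `l` with `i_l = 0` (a factor with `i_l = 1` contributes a single
column of ones, encoded by `Fin 1`). -/
noncomputable def Zmat (w : ℕ) (n : Fin (w + 1) → ℕ) (i : Fin (w + 1) → Bool) :
    Matrix ((l : Fin (w + 1)) → Fin (n l))
      ((l : Fin (w + 1)) → Fin (if i l then 1 else n l)) ℝ :=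
  Matrix.of fun a b => ∏ l, if i l then (1 : ℝ) else (if (a l : ℕ) = (b l : ℕ) then 1 else 0)

/-- `r_i = ∏_{l : i_l = 0} n_l`. -/
def rprod (w : ℕ) (n : Fin (w + 1) → ℕ) (i : Fin (w + 1) → Bool) : ℕ :=
  ∏ l ∈ Finset.univ.filter (fun l => i l = false), n l

/-- `n = ∏_l n_l`. -/
def Ntot (w : ℕ) (n : Fin (w + 1) → ℕ) : ℕ := ∏ l, n l

/-!
Factor by factor, `Z_i Z_iᵀ = K_i`, the `K_k` commute, and `Z_sᵀ Z_s = (n / p) I`. Hence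
`(p / n) X Xᵀ` is the orthogonal projection onto the range of `X` and it commutes with `Σ⁻¹`, so
generalized least squares agrees with ordinary least squares and the matrix `P` of the BLUP
collapses to `(I - (p / n) X Xᵀ) Σ⁻¹`. Expanding `Σ⁻¹` in the basis `K_k` gives the claim.
-/

section WeightedProjection

variable {R m p : Type*} [CommRing R] [Fintype m] [DecidableEq m] [Fintype p] [DecidableEq p]
  {A : Matrix m m R} {X : Matrix m p R} {Y : Matrix p m R} {c : R}

lemma inv_mul_mul_eq_smul_of_commute (hA : IsUnit A) (hYX : c • (Y * X) = 1)
    (hcomm : Commute A (X * Y)) : (Y * A * X)⁻¹ = (c * c) • (Y * A⁻¹ * X) := by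
  refine inv_eq_right_inv ?_
  calc Y * A * X * ((c * c) • (Y * A⁻¹ * X))
      = (c * c) • (Y * (A * (X * Y)) * A⁻¹ * X) := by
        simp only [Matrix.mul_smul, Matrix.mul_assoc]
    _ = (c * c) • (Y * X * Y * (A * A⁻¹) * X) := by
        rw [hcomm.eq]
        simp only [Matrix.mul_assoc]
    _ = (c • (Y * X)) * (c • (Y * X)) := by
        rw [mul_nonsing_inv A ((isUnit_iff_isUnit_det A).1 hA), Matrix.mul_one, smul_mul_smul_comm,
          Matrix.mul_assoc]
    _ = 1 := by rw [hYX, Matrix.one_mul]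

lemma mul_mul_inv_mul_mul_eq_smul_of_commute (hA : IsUnit A) (hYX : c • (Y * X) = 1)
    (hcomm : Commute A (X * Y)) : A * X * (Y * A * X)⁻¹ * Y * A = c • (X * Y * A) := by
  calc A * X * (Y * A * X)⁻¹ * Y * A
      = (c * c) • (A * (X * Y) * A⁻¹ * (X * Y) * A) := by
        rw [inv_mul_mul_eq_smul_of_commute hA hYX hcomm]
        simp only [Matrix.mul_smul, Matrix.smul_mul, Matrix.mul_assoc]
    _ = (c * c) • (X * Y * (A * A⁻¹) * (X * Y) * A) := by
        rw [hcomm.eq]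
        simp only [Matrix.mul_assoc]
    _ = c • (X * (c • (Y * X)) * Y * A) := by
        rw [mul_nonsing_inv A ((isUnit_iff_isUnit_det A).1 hA), Matrix.mul_one]
        simp only [Matrix.mul_smul, Matrix.smul_mul, Matrix.mul_assoc, smul_smul]
    _ = c • (X * Y * A) := by rw [hYX, Matrix.mul_one]

end WeightedProjection

section PiKronecker

variable {ι R : Type*} [Fintype ι] [CommSemiring R] {α β γ : ι → Type*}

/-- The Kronecker product `⊗_l A_l` of a finite family of matrices, with rows and columns indexed
by the tuples of row and column indices of the factors. -/
def piKronecker (A : ∀ l, Matrix (α l) (β l) R) : Matrix (∀ l, α l) (∀ l, β l) R :=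
  Matrix.of fun a b => ∏ l, A l (a l) (b l)

lemma piKronecker_transpose (A : ∀ l, Matrix (α l) (β l) R) :
    (piKronecker A)ᵀ = piKronecker fun l => (A l)ᵀ :=
  rfl

lemma piKronecker_mul [DecidableEq ι] [∀ l, Fintype (β l)] (A : ∀ l, Matrix (α l) (β l) R)
    (B : ∀ l, Matrix (β l) (γ l) R) :
    piKronecker A * piKronecker B = piKronecker fun l => A l * B l := by
  ext a b
  simp only [piKronecker, mul_apply, of_apply, ← Finset.prod_mul_distrib, Fintype.prod_sum]

lemma piKronecker_smul (c : ι → R) (A : ∀ l, Matrix (α l) (β l) R) :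
    (piKronecker fun l => c l • A l) = (∏ l, c l) • piKronecker A := by
  ext a b
  simp only [piKronecker, of_apply, Matrix.smul_apply, smul_eq_mul, Finset.prod_mul_distrib]

lemma piKronecker_one [∀ l, DecidableEq (α l)] :
    (piKronecker fun l => (1 : Matrix (α l) (α l) R)) = 1 := by
  ext a b
  simp only [piKronecker, of_apply, one_apply, Fintype.prod_boole, funext_iff]

lemma piKronecker_commute [DecidableEq ι] [∀ l, Fintype (α l)] {A B : ∀ l, Matrix (α l) (α l) R}
    (h : ∀ l, Commute (A l) (B l)) : Commute (piKronecker A) (piKronecker B) := by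
  rw [Commute, SemiconjBy, piKronecker_mul, piKronecker_mul]
  exact congrArg _ (funext fun l => (h l).eq)

end PiKronecker

section Factors

/-- The factor `J^b` of `Kmat`: the all-ones matrix if `b` is true and the identity otherwise. -/
def Kfactor (α R : Type*) [DecidableEq α] [Zero R] [One R] (b : Bool) : Matrix α α R :=
  if b then Matrix.of fun _ _ => 1 else 1

/-- The factor `1_m^b` of `Zmat`: the column of `m` ones if `b` is true and the identity otherwise.
The entries compare natural numbers because the type of the column index depends on `b`. -/
def Zfactor (R : Type*) [Zero R] [One R] (m : ℕ) (b : Bool) :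
    Matrix (Fin m) (Fin (if b then 1 else m)) R :=
  Matrix.of fun x y => if b then 1 else if (x : ℕ) = (y : ℕ) then 1 else 0

variable {R : Type*} [Semiring R]

lemma Kfactor_commute {α : Type*} [Fintype α] [DecidableEq α] (b d : Bool) :
    Commute (Kfactor α R b) (Kfactor α R d) := by
  cases b
  · exact Commute.one_left _
  · cases d
    · exact Commute.one_right _
    · exact Commute.refl _

lemma Zfactor_mul_transpose (m : ℕ) (b : Bool) :
    Zfactor R m b * (Zfactor R m b)ᵀ = Kfactor (Fin m) R b := by
  ext x y
  cases b
  · simp [Zfactor, Kfactor, mul_apply, one_apply, ← Fin.ext_iff]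
  · simp [Zfactor, Kfactor, mul_apply]

lemma Zfactor_transpose_mul (m : ℕ) (b : Bool) :
    (Zfactor R m b)ᵀ * Zfactor R m b = (if b then (m : R) else 1) • 1 := by
  ext x y
  cases b
  · change Fin m at x y
    change ∑ z : Fin m, (if (z : ℕ) = x then (1 : R) else 0) * (if (z : ℕ) = y then 1 else 0)
      = 1 * if x = y then 1 else 0
    simp [← Fin.ext_iff, eq_comm]
  · have hxy : x = y := Subsingleton.elim (α := Fin 1) x y
    simp [Zfactor, mul_apply, hxy]

end Factors

section BalancedDesign

variable (w : ℕ) (n : Fin (w + 1) → ℕ)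

lemma Kmat_eq_piKronecker (i : Fin (w + 1) → Bool) :
    Kmat w n i = piKronecker fun l => Kfactor (Fin (n l)) ℝ (i l) := by
  ext a b
  simp only [Kmat, piKronecker, of_apply]
  refine Finset.prod_congr rfl fun l _ => ?_
  cases i l <;> rfl

lemma Zmat_eq_piKronecker (i : Fin (w + 1) → Bool) :
    Zmat w n i = piKronecker fun l => Zfactor ℝ (n l) (i l) :=
  rfl

lemma Kmat_commute (i j : Fin (w + 1) → Bool) : Commute (Kmat w n i) (Kmat w n j) := by
  rw [Kmat_eq_piKronecker, Kmat_eq_piKronecker]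
  exact piKronecker_commute fun l => Kfactor_commute _ _

lemma Zmat_mul_transpose (i : Fin (w + 1) → Bool) :
    Zmat w n i * (Zmat w n i)ᵀ = Kmat w n i := by
  rw [Zmat_eq_piKronecker, piKronecker_transpose, piKronecker_mul, Kmat_eq_piKronecker]
  simp only [Zfactor_mul_transpose]

lemma rprod_mul_rprod_compl (i : Fin (w + 1) → Bool) :
    rprod w n i * rprod w n iᶜ = Ntot w n := by
  simpa [rprod, Ntot] using
    Finset.prod_filter_mul_prod_filter_not Finset.univ (fun l => i l = false) n

lemma Zmat_transpose_mul (i : Fin (w + 1) → Bool) :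
    (Zmat w n i)ᵀ * Zmat w n i = (rprod w n iᶜ : ℝ) • 1 := by
  rw [Zmat_eq_piKronecker, piKronecker_transpose, piKronecker_mul]
  simp only [Zfactor_transpose_mul]
  rw [piKronecker_smul, piKronecker_one, rprod, Finset.prod_filter]
  simp

variable {n} in
lemma smul_Zmat_transpose_mul (hn : ∀ l, 0 < n l) (i : Fin (w + 1) → Bool) :
    ((rprod w n i : ℝ) / (Ntot w n : ℝ)) • ((Zmat w n i)ᵀ * Zmat w n i) = 1 := by
  have hN : (Ntot w n : ℝ) ≠ 0 := by
    exact_mod_cast (Finset.prod_pos fun l _ => hn l).ne'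
  rw [Zmat_transpose_mul, smul_smul, div_mul_eq_mul_div, ← Nat.cast_mul, rprod_mul_rprod_compl,
    div_self hN, one_smul]

lemma Kmat_posSemidef (i : Fin (w + 1) → Bool) : (Kmat w n i).PosSemidef := by
  rw [← Zmat_mul_transpose, ← conjTranspose_eq_transpose_of_trivial]
  exact posSemidef_self_mul_conjTranspose _

lemma posDef_smul_one_add_sum_Kmat {S : Finset (Fin (w + 1) → Bool)} {σ₀ : ℝ} (hσ₀ : 0 < σ₀)
    {σ : (Fin (w + 1) → Bool) → ℝ} (hσ : ∀ k ∈ S, 0 ≤ σ k) :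
    (σ₀ • (1 : Matrix _ _ ℝ) + ∑ k ∈ S, σ k • Kmat w n k).PosDef :=
  (PosDef.one.smul hσ₀).add_posSemidef <|
    posSemidef_sum _ fun k hk => (Kmat_posSemidef w n k).smul (hσ k hk)

end BalancedDesign

theorem stmt18_general (w : ℕ) (n : Fin (w + 1) → ℕ) (hn : ∀ l, 0 < n l)
    (s : Fin (w + 1) → Bool)
    (Sig : Matrix ((l : Fin (w + 1)) → Fin (n l)) ((l : Fin (w + 1)) → Fin (n l)) ℝ)
    (hSig : IsUnit Sig)
    (τ : (Fin (w + 1) → Bool) → ℝ)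
    (hτ : Sig⁻¹ = ∑ k : Fin (w + 1) → Bool, τ k • Kmat w n k)
    (i : Fin (w + 1) → Bool)
    (y : ((l : Fin (w + 1)) → Fin (n l)) → ℝ) :
    ((Zmat w n i)ᵀ *
        (Sig⁻¹ - Sig⁻¹ * (Zmat w n s) *
          ((Zmat w n s)ᵀ * Sig⁻¹ * (Zmat w n s))⁻¹ * (Zmat w n s)ᵀ * Sig⁻¹)) *ᵥ y
      = ∑ k : Fin (w + 1) → Bool,
          τ k •
            (((Zmat w n i)ᵀ *
              ((1 : Matrix _ _ ℝ) -
                ((rprod w n s : ℝ) / (Ntot w n : ℝ)) • (Zmat w n s * (Zmat w n s)ᵀ)) *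
              Kmat w n k) *ᵥ y) := by
  have hcomm : Commute Sig⁻¹ (Zmat w n s * (Zmat w n s)ᵀ) := by
    rw [hτ, Zmat_mul_transpose]
    exact .sum_left _ _ _ fun k _ => (Kmat_commute w n k s).smul_left _
  rw [mul_mul_inv_mul_mul_eq_smul_of_commute (isUnit_nonsing_inv_iff.2 hSig)
      (smul_Zmat_transpose_mul w hn s) hcomm,
    ← Matrix.smul_mul, ← one_sub_mul, ← Matrix.mul_assoc, hτ]
  simp only [Matrix.mul_sum, Matrix.mul_smul, Matrix.sum_mulVec, Matrix.smul_mulVec]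

/-- Representation of the BLUP of the random effects in a balanced mixed ANOVA model
(Section 5.5): with `X = Z_s`, `p = r_s`, `Σ = σ₀I + ∑_{k∈S} σ_k K_k`,
`Σ⁻¹ = ∑_k τ_k K_k` and `P = Σ⁻¹ − Σ⁻¹X(X′Σ⁻¹X)⁻¹X′Σ⁻¹`, the BLUP block
`ṽ_i = σ_i Z_i′ P y` equals `∑_{k ∈ S_{w+1}} σ_i τ_k W_{i,k} y`, where
`W_{i,k} = Z_i′(I − (p/n)XX′)K_k`. -/
theorem stmt18 (w : ℕ) (hw : 1 ≤ w) (n : Fin (w + 1) → ℕ) (hn : ∀ l, 0 < n l)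
    (s : Fin (w + 1) → Bool) (hs : s (Fin.last w) = true)
    (S : Finset (Fin (w + 1) → Bool))
    (σ₀ : ℝ) (hσ₀ : 0 < σ₀)
    (σ : (Fin (w + 1) → Bool) → ℝ) (hσ : ∀ k ∈ S, 0 ≤ σ k)
    (Sig : Matrix ((l : Fin (w + 1)) → Fin (n l)) ((l : Fin (w + 1)) → Fin (n l)) ℝ)
    (hSig : Sig = σ₀ • (1 : Matrix _ _ ℝ) + ∑ k ∈ S, σ k • Kmat w n k)
    (τ : (Fin (w + 1) → Bool) → ℝ)
    (hτ : Sig⁻¹ = ∑ k : Fin (w + 1) → Bool, τ k • Kmat w n k)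
    (i : Fin (w + 1) → Bool) (hi : i ∈ S)
    (y : ((l : Fin (w + 1)) → Fin (n l)) → ℝ) :
    σ i • (((Zmat w n i)ᵀ *
        (Sig⁻¹ - Sig⁻¹ * (Zmat w n s) *
          ((Zmat w n s)ᵀ * Sig⁻¹ * (Zmat w n s))⁻¹ * (Zmat w n s)ᵀ * Sig⁻¹)) *ᵥ y)
      = ∑ k : Fin (w + 1) → Bool,
          (σ i * τ k) •
            (((Zmat w n i)ᵀ *
              ((1 : Matrix _ _ ℝ) -
                ((rprod w n s : ℝ) / (Ntot w n : ℝ)) • (Zmat w n s * (Zmat w n s)ᵀ)) *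
              Kmat w n k) *ᵥ y) := by
  simp only [mul_smul, ← Finset.smul_sum]
  rw [stmt18_general w n hn s Sig (hSig ▸ (posDef_smul_one_add_sum_Kmat w n hσ₀ hσ).isUnit) τ hτ]
end
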